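/- Let G be a finite Frobenius group with Frobenius kernel K and Frobenius complement H, and suppose that G has perfect order classes and that H is nilpotent. Then H is cyclic. -/

import Mathlib

/-- The number of elements of order `n` in the group `G`. -/
noncomputable def orderCount (G : Type*) [Group G] (n : ℕ) : ℕ :=
  Nat.card {g : G // orderOf g = n}

/-- A group has *perfect order classes* if, for every positive integer `n`, the number of
elements of order `n` is either zero or a divisor of the order of the group. -/
def PerfectOrderClasses (G : Type*) [Group G] : Prop :=
  ∀ n : ℕ, 0 < n → orderCount G n = 0 ∨ orderCount G n ∣ Nat.card G

/-- `G` is a Frobenius group with Frobenius kernel `K` and Frobenius complement `H`: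
`K` is a nontrivial proper normal subgroup, `H` a subgroup with `K ⊓ H = ⊥` and `KH = G`,
and the conjugation action of `H` on `K` is fixed-point-free. -/
def IsFrobeniusWith {G : Type*} [Group G] (K H : Subgroup G) : Prop :=
  K ≠ ⊥ ∧ K ≠ ⊤ ∧ K.Normal ∧ K ⊓ H = ⊥ ∧
    (∀ g : G, ∃ k ∈ K, ∃ h ∈ H, g = k * h) ∧
    ∀ h ∈ H, h ≠ 1 → ∀ k ∈ K, k ≠ 1 → h * k * h⁻¹ ≠ k

/-!
Each Sylow subgroup of `H` acts fixed-point-freely on `K` and so contains no `C_p × C_p`. Hence it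
is cyclic or, for `p = 2`, has order `4c` with `c` even and `2(c + 1)` elements of order `4`. If the
nilpotent group `H` is not cyclic, then it has order `4cm` with `m` odd and `2(c + 1)` elements of
order `4`; perfect order classes make `2(c + 1)` divide `4cm`, so `c + 1` divides `m` and `c < m`.

On the other hand, an involution of `H` inverts `K`, so `K` is abelian. Every nontrivial order class
of `K` is a union of regular `H`-orbits, and perfect order classes then force `K` to be a `p`-group
whose elements of order `p` form a single `H`-orbit. By Schur's lemma and Wedderburn's little
theorem, the subgroup killed by `p` is a vector space of dimension at least two over a field whose
multiplicative group contains the centre of `H`, whence `(|Z(H)| + 1)² ≤ |H| + 1`. As `2m` divides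
`|Z(H)|`, this gives `m < c`.
-/

open Subgroup

section OrderCount

variable {G : Type*} [Group G] {n : ℕ}

theorem orderCount_eq_add_ncard_notMem [Finite G] (A : Subgroup G) (n : ℕ) :
    orderCount G n = orderCount A n + {g | g ∉ A ∧ orderOf g = n}.ncard := by
  have himage : Subtype.val '' {g : A | orderOf g = n} = {g | orderOf g = n} ∩ (A : Set G) := by
    ext g
    constructor
    · rintro ⟨g, hg, rfl⟩
      exact ⟨(orderOf_coe g).trans hg, g.2⟩
    · rintro ⟨hg, hgA⟩
      exact ⟨⟨g, hgA⟩, (orderOf_mk g hgA).trans hg, rfl⟩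
  have hsdiff : {g | g ∉ A ∧ orderOf g = n} = {g | orderOf g = n} \ (A : Set G) := by
    ext g
    exact and_comm
  have hA : orderCount A n = ({g | orderOf g = n} ∩ (A : Set G)).ncard := by
    rw [← himage, Set.ncard_image_of_injective _ Subtype.val_injective]
    rfl
  rw [hA, hsdiff, Set.ncard_inter_add_ncard_sdiff_eq_ncard]
  rfl

theorem orderCount_eq_totient [Finite G] [IsCyclic G] (hn : n ∣ Nat.card G) :
    orderCount G n = n.totient := by
  have := Fintype.ofFinite G
  rw [orderCount, Nat.card_eq_fintype_card, Fintype.card_subtype,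
    IsCyclic.card_orderOf_eq_totient (Nat.card_eq_fintype_card (α := G) ▸ hn)]

theorem orderCount_pos_iff [Finite G] : 0 < orderCount G n ↔ ∃ g : G, orderOf g = n := by
  rw [orderCount, Finite.card_pos_iff, nonempty_subtype]

theorem dvd_card_of_orderCount_ne_zero (h : orderCount G n ≠ 0) : n ∣ Nat.card G := by
  obtain ⟨⟨g, rfl⟩⟩ := (Nat.card_ne_zero.mp h).1
  exact orderOf_dvd_natCard g

theorem orderCount_pos_of_prime_dvd [Finite G] (hn : n.Prime) (h : n ∣ Nat.card G) :
    0 < orderCount G n :=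
  have : Fact n.Prime := ⟨hn⟩
  orderCount_pos_iff.mpr (exists_prime_orderOf_dvd_card' n h)

theorem orderCount_pos_of_isPGroup [Finite G] [Nontrivial G] (hn : n.Prime) (hG : IsPGroup n G) :
    0 < orderCount G n :=
  have : Fact n.Prime := ⟨hn⟩
  orderCount_pos_of_prime_dvd hn (hG.card_eq_or_dvd.resolve_left Finite.one_lt_card.ne')

theorem orderCount_eq_of_forall_mem [Finite G] {A : Subgroup G}
    (hA : ∀ g : G, orderOf g = n → g ∈ A) : orderCount G n = orderCount A n := by
  have hempty : {g | g ∉ A ∧ orderOf g = n} = ∅ :=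
    Set.eq_empty_of_forall_notMem fun g hg => hg.1 (hA g hg.2)
  rw [orderCount_eq_add_ncard_notMem A, hempty, Set.ncard_empty, add_zero]

theorem orderOf_pow_eq_of_modEq {g : G} {m k : ℕ} (hn : 0 < n) (hm : 0 < m)
    (hg : orderOf g = m * n) (hkm : k ≡ 1 [MOD m]) (hkn : k ≡ 0 [MOD n]) (h : m.Coprime n) :
    orderOf (g ^ k) = m := by
  have hgcd : (m * n).gcd k = n := by
    rw [Nat.gcd_comm, h.gcd_mul, hkm.gcd_eq, hkn.gcd_eq, Nat.gcd_one_left, Nat.gcd_zero_left,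
      one_mul]
  have hfin : IsOfFinOrder g := orderOf_pos_iff.mp (hg ▸ Nat.mul_pos hm hn)
  rw [hfin.orderOf_pow, hg, hgcd, Nat.mul_div_cancel _ hn]

theorem orderCount_mul_of_coprime {A : Type*} [CommGroup A] {m : ℕ} (hm : 0 < m) (hn : 0 < n)
    (h : m.Coprime n) : orderCount A (m * n) = orderCount A m * orderCount A n := by
  obtain ⟨k, hkm, hkn⟩ := Nat.chineseRemainder h 1 0
  obtain ⟨l, hlm, hln⟩ := Nat.chineseRemainder h 0 1
  have hkl : k + l ≡ 1 [MOD m * n] :=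
    (Nat.modEq_and_modEq_iff_modEq_mul h).mp ⟨hkm.add hlm, hkn.add hln⟩
  have hpow {a : A} {r s d : ℕ} (ha : orderOf a = d) (hrs : r ≡ s [MOD d]) : a ^ r = a ^ s :=
    pow_eq_pow_iff_modEq.mpr (ha ▸ hrs)
  have hsplit {g : A} (hg : orderOf g = m * n) : g ^ k * g ^ l = g := by
    rw [← pow_add, hpow hg hkl, pow_one]
  have hfst {a b : A} (ha : orderOf a = m) (hb : orderOf b = n) : (a * b) ^ k = a := by
    rw [mul_pow, hpow ha hkm, hpow hb hkn, pow_one, pow_zero, mul_one]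
  have hsnd {a b : A} (ha : orderOf a = m) (hb : orderOf b = n) : (a * b) ^ l = b := by
    rw [mul_pow, hpow ha hlm, hpow hb hln, pow_one, pow_zero, one_mul]
  rw [orderCount, orderCount, orderCount, ← Nat.card_prod]
  exact Nat.card_congr
    { toFun g := (⟨g.1 ^ k, orderOf_pow_eq_of_modEq hn hm g.2 hkm hkn h⟩,
        ⟨g.1 ^ l, orderOf_pow_eq_of_modEq hm hn (g.2.trans (mul_comm m n)) hln hlm h.symm⟩)
      invFun ab := ⟨ab.1.1 * ab.2.1, by
        rw [(Commute.all _ _).orderOf_mul_eq_mul_orderOf_of_coprime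
          (by rwa [ab.1.2, ab.2.2]), ab.1.2, ab.2.2]⟩
      left_inv g := Subtype.ext (hsplit g.2)
      right_inv ab := Prod.ext (Subtype.ext (hfst ab.1.2 ab.2.2))
        (Subtype.ext (hsnd ab.1.2 ab.2.2)) }

theorem card_ker_powMonoidHom {A : Type*} [CommGroup A] [Finite A] {p : ℕ} (hp : p.Prime) :
    Nat.card (powMonoidHom p : A →* A).ker = orderCount A p + 1 := by
  have hset : ((powMonoidHom p : A →* A).ker : Set A) = insert 1 {a | orderOf a = p} := by
    ext a
    rw [SetLike.mem_coe, MonoidHom.mem_ker, powMonoidHom_apply, ← orderOf_dvd_iff_pow_eq_one,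
      Nat.dvd_prime hp, orderOf_eq_one_iff]
    rfl
  have h1 : (1 : A) ∉ {a : A | orderOf a = p} := fun h => hp.ne_one (h.symm.trans orderOf_one)
  rw [← SetLike.coe_sort_coe, Nat.card_coe_set_eq, hset, Set.ncard_insert_of_notMem h1]
  rfl

end OrderCount

section ElementsOfGroups

variable {G : Type*} [Group G] {a x : G} {u : ℕ}

theorem exists_conj_eq_pow [Finite G] (a x : G) [h : (zpowers a).Normal] :
    ∃ u : ℕ, x * a * x⁻¹ = a ^ u := by
  obtain ⟨u, hu⟩ := mem_powers_iff_mem_zpowers.mpr (h.conj_mem a (mem_zpowers a) x)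
  exact ⟨u, hu.symm⟩

theorem conj_pow_eq_pow_pow (h : x * a * x⁻¹ = a ^ u) (n : ℕ) :
    x ^ n * a * (x ^ n)⁻¹ = a ^ u ^ n := by
  induction n with
  | zero => simp
  | succ n ih =>
    calc x ^ (n + 1) * a * (x ^ (n + 1))⁻¹
        = x * (x ^ n * a * (x ^ n)⁻¹) * x⁻¹ := by rw [pow_succ']; group
      _ = a ^ u ^ (n + 1) := by rw [ih, ← conj_pow, h, ← pow_mul, pow_succ']

theorem pow_modEq_one_of_conj_eq_pow (h : x * a * x⁻¹ = a ^ u) {n : ℕ}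
    (hx : Commute (x ^ n) a) : u ^ n ≡ 1 [MOD orderOf a] := by
  rw [← pow_eq_pow_iff_modEq, pow_one, ← conj_pow_eq_pow_pow h, hx.eq, mul_inv_cancel_right]

theorem mul_pow_of_conj_eq_pow (h : x * a * x⁻¹ = a ^ u) (n : ℕ) :
    (a * x) ^ n = a ^ (∑ i ∈ Finset.range n, u ^ i) * x ^ n := by
  induction n with
  | zero => simp
  | succ n ih =>
    have hcomm (s : ℕ) : x * a ^ s = a ^ (u * s) * x := by
      rw [pow_mul, ← h, conj_pow, inv_mul_cancel_right]
    rw [pow_succ', ih, geom_sum_succ, pow_succ' a, pow_succ' x, mul_assoc a, ← mul_assoc x, hcomm]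
    simp only [mul_assoc]

theorem commute_of_mem_zpowers {g : G} (h : g ∈ zpowers x) : Commute x g := by
  obtain ⟨k, rfl⟩ := h
  exact (Commute.refl x).zpow_right k

theorem modEq_one_of_pow_mem_zpowers {p : ℕ} [Fact p.Prime] (hG : IsPGroup p G) (ha : a ≠ 1)
    (hu : x * a * x⁻¹ = a ^ u) (hxp : x ^ p ∈ zpowers a) : u ≡ 1 [MOD p] := by
  have hup : u ^ p ≡ 1 [MOD p] :=
    (pow_modEq_one_of_conj_eq_pow hu (commute_of_mem_zpowers hxp).symm).of_dvd (hG.dvd_orderOf ha)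
  rw [← ZMod.natCast_eq_natCast_iff] at hup ⊢
  rwa [Nat.cast_pow, ZMod.pow_card] at hup

theorem orderOf_mk_eq_prime_iff {p : ℕ} [Fact p.Prime] {A : Subgroup G} [A.Normal] :
    orderOf (x : G ⧸ A) = p ↔ x ^ p ∈ A ∧ x ∉ A := by
  rw [orderOf_eq_prime_iff, ← QuotientGroup.mk_pow, QuotientGroup.eq_one_iff, ne_eq,
    QuotientGroup.eq_one_iff]

end ElementsOfGroups

theorem not_sq_dvd_geom_sum_of_modEq_one {p u : ℕ} (hp : p.Prime) (hodd : Odd p)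
    (hu : u ≡ 1 [MOD p]) : ¬ p ^ 2 ∣ ∑ i ∈ Finset.range p, u ^ i := by
  have hpu : ¬ (p : ℤ) ∣ u := by
    rw [Int.natCast_dvd_natCast, (Nat.ModEq.dvd_iff hu dvd_rfl)]
    exact hp.not_dvd_one
  have h := emultiplicity_geom_sum₂_eq_one (R := ℤ) (x := u) (y := 1)
    (Nat.prime_iff_prime_int.mp hp) hodd (by simpa using Nat.modEq_iff_dvd.mp hu.symm) hpu
  simp only [one_pow, mul_one] at h
  intro hdvd
  have hle : (2 : ℕ) ≤ emultiplicity (p : ℤ) (∑ i ∈ Finset.range p, (u : ℤ) ^ i) :=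
    le_emultiplicity_of_pow_dvd (mod_cast hdvd)
  rw [h] at hle
  exact absurd hle (by norm_num)

/-- `p`-rank at most one, for `p` prime: `G` has no subgroup isomorphic to `C_p × C_p`. -/
def PRankLEOne (p : ℕ) (G : Type*) [Group G] : Prop :=
  ∀ x y : G, orderOf x = p → orderOf y = p → Commute x y → y ∈ zpowers x

section PGroup

variable {p : ℕ} [hp : Fact p.Prime] {P : Type*} [Group P] [Finite P]

theorem exists_orderOf_eq_mem_center (hP : IsPGroup p P) (N : Subgroup P) [N.Normal]
    (hN : N ≠ ⊥) : ∃ z ∈ N, orderOf z = p ∧ z ∈ center P := by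
  have hdvd : p ∣ Nat.card N :=
    ((hP.to_subgroup N).card_eq_or_dvd).resolve_left fun h => hN (card_eq_one.mp h)
  obtain ⟨b, hb, hb1⟩ := (hP.of_equiv ConjAct.toConjAct)
    |>.exists_fixed_point_of_prime_dvd_card_of_fixed_point N hdvd
      (a := 1) fun g => smul_one g
  have hbc : (b : P) ∈ center P := mem_center_iff.mpr fun g => by
    have h := congrArg Subtype.val (hb (ConjAct.toConjAct g))
    rw [ConjAct.Subgroup.val_conj_smul, ConjAct.toConjAct_smul] at h
    exact mul_inv_eq_iff_eq_mul.mp h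
  have hb1' : (b : P) ≠ 1 := fun h => hb1 (Subtype.ext h.symm)
  exact ⟨b ^ (orderOf (b : P) / p), N.pow_mem b.2 _,
    orderOf_pow_orderOf_div (orderOf_pos _).ne' (hP.dvd_orderOf hb1'), (center P).pow_mem hbc _⟩

theorem exists_notMem_pow_mem (hP : IsPGroup p P) (A : Subgroup P) [A.Normal] (hA : A ≠ ⊤) :
    ∃ x ∉ A, x ^ p ∈ A := by
  have : Nontrivial (P ⧸ A) := QuotientGroup.nontrivial_iff.mpr hA
  obtain ⟨q, -, hq, -⟩ := exists_orderOf_eq_mem_center (hP.to_quotient A) ⊤ top_ne_bot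
  obtain ⟨x, rfl⟩ := QuotientGroup.mk_surjective q
  exact ⟨x, (orderOf_mk_eq_prime_iff.mp hq).symm⟩

/-- A central element of order `p` together with any further element of order `p` would generate
`C_p × C_p`, so all elements of order `p` lie in the same subgroup. -/
theorem PRankLEOne.mem_of_pow_eq_one (hr : PRankLEOne p P) (hP : IsPGroup p P) {A : Subgroup P}
    (hA : A ≠ ⊥) {y : P} (hy : y ^ p = 1) : y ∈ A := by
  obtain rfl | hy1 := eq_or_ne y 1
  · exact A.one_mem
  have : Nontrivial P := ⟨y, 1, hy1⟩
  obtain ⟨z, -, hz, hzc⟩ := exists_orderOf_eq_mem_center hP ⊤ top_ne_bot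
  have : Nontrivial A := A.nontrivial_iff_ne_bot.mpr hA
  obtain ⟨b, -, hb, -⟩ := exists_orderOf_eq_mem_center (hP.to_subgroup A) ⊤ top_ne_bot
  rw [← orderOf_coe] at hb
  have hyz : y ∈ zpowers z :=
    hr z y hz (orderOf_eq_prime hy hy1) (mem_center_iff.mp hzc y).symm
  have hzb : z ∈ zpowers (b : P) := hr b z hb hz (mem_center_iff.mp hzc b)
  exact (zpowers_le.mpr b.2) ((zpowers_le.mpr hzb) hyz)

section NormalizedCyclic

variable {a x : P} {u : ℕ}

/-- Otherwise `x` could be corrected by an element of `⟨a⟩` to have `p`-th power `1`. -/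
theorem PRankLEOne.pow_notMem_zpowers_pow_geom_sum (hr : PRankLEOne p P) (hP : IsPGroup p P)
    (ha : a ≠ 1) (hu : x * a * x⁻¹ = a ^ u) (hx : x ∉ zpowers a) :
    x ^ p ∉ zpowers (a ^ ∑ i ∈ Finset.range p, u ^ i) := by
  rintro ⟨j, hj : (a ^ _) ^ j = x ^ p⟩
  have hconj : x * a ^ (-j) * x⁻¹ = (a ^ (-j)) ^ u := by
    rw [← conj_zpow, hu, ← zpow_natCast, ← zpow_natCast, ← zpow_mul, zpow_mul']
  have hpow : (a ^ (-j) * x) ^ p = 1 := by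
    rw [mul_pow_of_conj_eq_pow hconj, ← hj, ← zpow_natCast, ← zpow_natCast, ← zpow_mul, ← zpow_mul,
      ← zpow_add, neg_mul, mul_comm, neg_add_cancel, zpow_zero]
  have hmem : a ^ (-j) * x ∈ zpowers a := hr.mem_of_pow_eq_one hP (zpowers_ne_bot.mpr ha) hpow
  exact hx (((zpowers a).mul_mem_cancel_left ((zpowers a).zpow_mem (mem_zpowers a) _)).mp hmem)

theorem PRankLEOne.mem_zpowers_of_dvd_geom_sum (hr : PRankLEOne p P) (hP : IsPGroup p P)
    (hu : x * a * x⁻¹ = a ^ u) (hx : x ∉ zpowers a) (hxp : x ^ p ∈ zpowers a)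
    (hdvd : p ∣ ∑ i ∈ Finset.range p, u ^ i) (hsq : ¬ p ^ 2 ∣ ∑ i ∈ Finset.range p, u ^ i) :
    a ∈ zpowers x := by
  have mem_of_not_dvd {n : ℕ} (hn : ¬ p ∣ n) (b : P) : b ∈ zpowers (b ^ n) :=
    mem_zpowers_pow_iff.mpr
      (hP.orderOf_coprime ((Nat.Prime.coprime_iff_not_dvd hp.out).mpr hn) b).symm
  obtain rfl | ha := eq_or_ne a 1
  · exact one_mem _
  obtain ⟨s, hs⟩ := hdvd
  have hps : ¬ p ∣ s := fun h => hsq (by rw [hs, pow_two]; exact mul_dvd_mul_left p h)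
  obtain ⟨t, ht : a ^ t = x ^ p⟩ := mem_powers_iff_mem_zpowers.mpr hxp
  by_cases hpt : p ∣ t
  · refine absurd ?_ (hr.pow_notMem_zpowers_pow_geom_sum hP ha hu hx)
    obtain ⟨r, rfl⟩ := hpt
    rw [hs, ← ht, pow_mul, pow_mul]
    exact pow_mem (mem_of_not_dvd hps _) r
  · have hat : a ∈ zpowers (a ^ t) := mem_of_not_dvd hpt a
    rw [ht] at hat
    exact (zpowers_le.mpr (pow_mem (mem_zpowers x) p)) hat

theorem PRankLEOne.sq_dvd_geom_sum (hr : PRankLEOne p P) (hP : IsPGroup p P)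
    (hc : ∀ w : P, Commute w a → w ∈ zpowers a) (hu : x * a * x⁻¹ = a ^ u)
    (hx : x ∉ zpowers a) (hxp : x ^ p ∈ zpowers a) :
    p ^ 2 ∣ ∑ i ∈ Finset.range p, u ^ i := by
  have ha : a ≠ 1 := by
    rintro rfl
    exact hx (hc x (Commute.one_right x))
  have hu1 : (u : ZMod p) = 1 := by
    simpa using (ZMod.natCast_eq_natCast_iff u 1 p).mpr (modEq_one_of_pow_mem_zpowers hP ha hu hxp)
  have hdvd : p ∣ ∑ i ∈ Finset.range p, u ^ i := by
    rw [← ZMod.natCast_eq_zero_iff]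
    simp [hu1]
  by_contra hsq
  exact hx (hc x (commute_of_mem_zpowers (hr.mem_zpowers_of_dvd_geom_sum hP hu hx hxp hdvd hsq)))

end NormalizedCyclic

theorem PRankLEOne.exists_zpowers_lt_normal (hr : PRankLEOne p P) (hP : IsPGroup p P) {a w : P}
    [(zpowers a).Normal] (hwa : Commute w a) (hw : w ∉ zpowers a) :
    ∃ x : P, zpowers a < zpowers x ∧ (zpowers x).Normal := by
  let π := QuotientGroup.mk' (zpowers a)
  have hbot : (centralizer (zpowers a : Set P)).map π ≠ ⊥ := fun h => by
    have hwC : w ∈ centralizer (zpowers a : Set P) := by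
      rw [zpowers_eq_closure, centralizer_closure, mem_centralizer_singleton_iff]
      exact hwa.eq
    have hπw : π w = 1 := by simpa [h] using mem_map_of_mem π hwC
    exact hw ((QuotientGroup.eq_one_iff w).mp hπw)
  have : ((centralizer (zpowers a : Set P)).map π).Normal :=
    Normal.map inferInstance _ (QuotientGroup.mk'_surjective _)
  obtain ⟨_, ⟨x, hxC, rfl⟩, hxo, hxc⟩ :=
    exists_orderOf_eq_mem_center (hP.to_quotient _) _ hbot
  obtain ⟨hxp, hxa⟩ := orderOf_mk_eq_prime_iff.mp hxo
  have hconj : x * a * x⁻¹ = a ^ 1 := by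
    rw [← mem_centralizer_iff.mp hxC a (mem_zpowers a), mul_inv_cancel_right, pow_one]
  have hax : zpowers a ≤ zpowers x := by
    rw [zpowers_le]
    refine hr.mem_zpowers_of_dvd_geom_sum hP hconj hxa hxp (by simp) fun h => ?_
    simp only [one_pow, Finset.sum_const, Finset.card_range, smul_eq_mul, mul_one] at h
    exact (Nat.le_of_dvd hp.out.pos h).not_gt (lt_self_pow₀ hp.out.one_lt one_lt_two)
  refine ⟨x, hax.lt_of_ne fun h => hxa (h ▸ mem_zpowers x), ?_⟩
  have hcomap : (zpowers (π x)).comap π = zpowers x := by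
    rw [← MonoidHom.map_zpowers, comap_map_eq, QuotientGroup.ker_mk', sup_eq_left.mpr hax]
  have hnormal : (zpowers (π x)).Normal := ⟨fun y hy g => by
    rwa [mem_center_iff.mp (zpowers_le.mpr hxc hy) g, mul_inv_cancel_right]⟩
  exact hcomap ▸ hnormal.comap π

theorem PRankLEOne.exists_normal_zpowers_self_centralizing (hr : PRankLEOne p P)
    (hP : IsPGroup p P) :
    ∃ a : P, (zpowers a).Normal ∧ ∀ w : P, Commute w a → w ∈ zpowers a := by
  let S : Set (Subgroup P) := {A | A.Normal ∧ ∃ a, zpowers a = A}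
  have hS : S.Nonempty := ⟨⊥, inferInstance, 1, zpowers_one_eq_bot⟩
  obtain ⟨_, ⟨hn, a, rfl⟩, hmax⟩ := S.toFinite.exists_maximal hS
  refine ⟨a, hn, fun w hwa => ?_⟩
  by_contra hw
  obtain ⟨x, hlt, hx⟩ := hr.exists_zpowers_lt_normal hP hwa hw
  exact hlt.not_ge (hmax ⟨hx, x, rfl⟩ hlt.le)

theorem PRankLEOne.isCyclic_of_odd (hr : PRankLEOne p P) (hP : IsPGroup p P) (hodd : Odd p) :
    IsCyclic P := by
  obtain ⟨a, hn, hc⟩ := hr.exists_normal_zpowers_self_centralizing hP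
  by_contra hcyc
  have htop : zpowers a ≠ ⊤ := fun h => hcyc ⟨a, (eq_top_iff' _).mp h⟩
  obtain ⟨x, hx, hxp⟩ := exists_notMem_pow_mem hP _ htop
  obtain ⟨u, hu⟩ := exists_conj_eq_pow a x
  have ha : a ≠ 1 := by
    rintro rfl
    exact hx (hc x (Commute.one_right x))
  exact not_sq_dvd_geom_sum_of_modEq_one hp.out hodd (modEq_one_of_pow_mem_zpowers hP ha hu hxp)
    (hr.sq_dvd_geom_sum hP hc hu hx hxp)

theorem PRankLEOne.isCyclic_of_isMulCommutative (hr : PRankLEOne p P) (hP : IsPGroup p P)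
    [IsMulCommutative P] : IsCyclic P := by
  obtain ⟨a, -, hc⟩ := hr.exists_normal_zpowers_self_centralizing hP
  exact ⟨a, fun x => hc x (IsMulCommutative.is_comm.comm x a)⟩

end PGroup

section TwoGroup

variable {P : Type*} [Group P] [Finite P]

section

variable {a : P} [hn : (zpowers a).Normal]

/-- Here `x` acts on `⟨a⟩` by a power `u ≡ 3` modulo `4` but fixes `x ^ 2`, which is therefore an
involution. It would lie in `⟨a ^ (1 + u)⟩` if that subgroup were nontrivial. -/
theorem PRankLEOne.conj_eq_inv_of_sq_mem (hr : PRankLEOne 2 P) (hP : IsPGroup 2 P)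
    (hc : ∀ w : P, Commute w a → w ∈ zpowers a) {x : P} (hx : x ∉ zpowers a)
    (hx2 : x ^ 2 ∈ zpowers a) : orderOf x = 4 ∧ x * a * x⁻¹ = a⁻¹ := by
  obtain ⟨u, hu⟩ := exists_conj_eq_pow a x
  have hu4 : 4 ∣ u + 1 := by
    simpa [Finset.sum_range_succ, add_comm] using hr.sq_dvd_geom_sum hP hc hu hx hx2
  have ha : a ≠ 1 := by
    rintro rfl
    exact hx (hc x (Commute.one_right x))
  have hx2_ne : x ^ 2 ≠ 1 := fun h =>
    hx (hr.mem_of_pow_eq_one hP (zpowers_ne_bot.mpr ha) h)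
  have hx4 : (x ^ 2) ^ 2 = 1 := by
    obtain ⟨w, rfl⟩ : ∃ w, u = 2 * w + 1 := ⟨u / 2, by omega⟩
    have hfix : (x ^ 2) ^ (2 * w + 1) = x ^ 2 := by
      obtain ⟨t, ht : a ^ t = x ^ 2⟩ := mem_powers_iff_mem_zpowers.mpr hx2
      rw [← ht, pow_right_comm, ← hu, conj_pow, ht]
      group
    have hw : ((x ^ 2) ^ 2) ^ w = 1 := by
      rwa [pow_succ, pow_mul, mul_eq_right] at hfix
    by_contra hne
    have := (hP.dvd_orderOf hne).trans (orderOf_dvd_of_pow_eq_one hw)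
    omega
  have hau : a ^ (u + 1) = 1 := by
    by_contra hne
    refine hr.pow_notMem_zpowers_pow_geom_sum hP ha hu hx ?_
    rw [Finset.sum_range_succ, Finset.sum_range_one, pow_zero, pow_one, add_comm]
    exact hr.mem_of_pow_eq_one hP (zpowers_ne_bot.mpr hne) hx4
  refine ⟨orderOf_eq_prime_pow (p := 2) (n := 1) (by simpa using hx2_ne) ?_, ?_⟩
  · rw [← hx4, ← pow_mul]; rfl
  · rw [hu, eq_inv_iff_mul_eq_one, ← pow_succ, hau]

theorem PRankLEOne.four_dvd_orderOf (hr : PRankLEOne 2 P) (hP : IsPGroup 2 P)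
    (hc : ∀ w : P, Commute w a → w ∈ zpowers a) {x : P} (hx : x ∉ zpowers a)
    (hx2 : x ^ 2 ∈ zpowers a) : 4 ∣ orderOf a := by
  by_contra h4
  have ha2 : a ^ 2 = 1 := by
    obtain ⟨k, hk⟩ := IsPGroup.iff_orderOf.mp hP a
    have hk1 : k ≤ 1 := by
      by_contra! hk2
      exact h4 (hk ▸ pow_dvd_pow 2 hk2)
    exact orderOf_dvd_iff_pow_eq_one.mp (hk ▸ pow_dvd_pow 2 hk1)
  have hcomm : Commute x a := by
    have hinv := (hr.conj_eq_inv_of_sq_mem hP hc hx hx2).2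
    rwa [inv_eq_of_mul_eq_one_right ((pow_two a).symm.trans ha2), mul_inv_eq_iff_eq_mul] at hinv
  exact hx (hc x hcomm)

theorem PRankLEOne.sq_mem_of_pow_four_mem (hr : PRankLEOne 2 P) (hP : IsPGroup 2 P)
    (hc : ∀ w : P, Commute w a → w ∈ zpowers a) {y : P} (hy : (y ^ 2) ^ 2 ∈ zpowers a) :
    y ^ 2 ∈ zpowers a := by
  by_contra hy2
  obtain ⟨v, hv⟩ := exists_conj_eq_pow a y
  have hinv : a ^ v ^ 2 = a⁻¹ :=
    (conj_pow_eq_pow_pow hv 2).symm.trans (hr.conj_eq_inv_of_sq_mem hP hc hy2 hy).2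
  have hpow : a ^ (v ^ 2 + 1) = 1 := by rw [pow_succ, hinv, inv_mul_cancel]
  have h4 : 4 ∣ v ^ 2 + 1 :=
    (hr.four_dvd_orderOf hP hc hy2 hy).trans (orderOf_dvd_of_pow_eq_one hpow)
  obtain ⟨w, rfl | rfl⟩ := Nat.even_or_odd' v <;> ring_nf at h4 <;> omega

theorem PRankLEOne.sq_mem_zpowers (hr : PRankLEOne 2 P) (hP : IsPGroup 2 P)
    (hc : ∀ w : P, Commute w a → w ∈ zpowers a) (y : P) : y ^ 2 ∈ zpowers a := by
  have descend (k : ℕ) (y : P) (hy : y ^ 2 ^ (k + 1) ∈ zpowers a) : y ^ 2 ∈ zpowers a := by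
    induction k generalizing y with
    | zero => simpa using hy
    | succ k ih =>
      refine hr.sq_mem_of_pow_four_mem hP hc (ih (y ^ 2) ?_)
      rwa [← pow_mul, ← pow_succ']
  obtain ⟨k, hk⟩ := hP y
  exact descend k y (by rw [pow_succ, pow_mul, hk, one_pow]; exact one_mem _)

theorem PRankLEOne.index_zpowers_eq_two (hr : PRankLEOne 2 P) (hP : IsPGroup 2 P)
    (hc : ∀ w : P, Commute w a → w ∈ zpowers a) {x : P} (hx : x ∉ zpowers a) :
    (zpowers a).index = 2 := by
  have hinv {y : P} (hy : y ∉ zpowers a) : y * a * y⁻¹ = a⁻¹ :=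
    (hr.conj_eq_inv_of_sq_mem hP hc hy (hr.sq_mem_zpowers hP hc y)).2
  refine index_eq_two_iff.mpr ⟨x, fun b => ?_⟩
  by_cases hb : b ∈ zpowers a
  · exact Or.inr ⟨hb, fun h => hx (((zpowers a).mul_mem_cancel_left hb).mp h)⟩
  · refine Or.inl ⟨hc _ ?_, hb⟩
    have hconj : b * x * a * (b * x)⁻¹ = a := calc
      b * x * a * (b * x)⁻¹ = b * (x * a * x⁻¹) * b⁻¹ := by group
      _ = a := by rw [hinv hx, ← conj_inv, hinv hb, inv_inv]
    exact mul_inv_eq_iff_eq_mul.mp hconj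

end

/-- There are two elements of order `4` in a cyclic subgroup of index `2`, and all elements outside
it have order `4`. -/
theorem PRankLEOne.card_and_orderCount_four (hr : PRankLEOne 2 P) (hP : IsPGroup 2 P)
    (hcyc : ¬ IsCyclic P) :
    ∃ c, Even c ∧ Nat.card P = 4 * c ∧ orderCount P 4 = 2 * (c + 1) := by
  obtain ⟨a, hn, hc⟩ := hr.exists_normal_zpowers_self_centralizing hP
  obtain ⟨x, hx⟩ : ∃ x, x ∉ zpowers a := by
    by_contra! h
    exact hcyc ⟨a, h⟩
  have hout {y : P} (hy : y ∉ zpowers a) : orderOf y = 4 :=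
    (hr.conj_eq_inv_of_sq_mem hP hc hy (hr.sq_mem_zpowers hP hc y)).1
  have h4 : 4 ∣ Nat.card (zpowers a) :=
    Nat.card_zpowers a ▸ hr.four_dvd_orderOf hP hc hx (hr.sq_mem_zpowers hP hc x)
  have hcard : Nat.card (zpowers a) * 2 = Nat.card P :=
    hr.index_zpowers_eq_two hP hc hx ▸ card_mul_index _
  have hnotMem : {y | y ∉ zpowers a ∧ orderOf y = 4}.ncard = Nat.card (zpowers a) := by
    have hcompl : {y | y ∉ zpowers a ∧ orderOf y = 4} = (zpowers a : Set P)ᶜ :=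
      Set.ext fun y => and_iff_left_of_imp hout
    have hadd := Set.ncard_add_ncard_compl (zpowers a : Set P)
    rw [← Nat.card_coe_set_eq] at hadd
    rw [hcompl]
    exact Nat.add_left_cancel (hadd.trans (hcard.symm.trans (mul_two _)))
  obtain ⟨d, hd⟩ := h4
  refine ⟨2 * d, even_two_mul d, by omega, ?_⟩
  rw [orderCount_eq_add_ncard_notMem (zpowers a), orderCount_eq_totient ⟨d, hd⟩, hnotMem, hd,
    show Nat.totient 4 = 2 from rfl]
  ring

end TwoGroup

section TransitiveLinearAction

variable {H V : Type*} [Group H] [AddCommGroup V] (ρ : H →* AddMonoid.End V)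

/-- The `H`-equivariant endomorphisms of `V`, where `H` acts on `V` through `ρ`. -/
def equivariantEnd : Subring (AddMonoid.End V) :=
  Subring.centralizer (Set.range ρ)

namespace equivariantEnd

variable {ρ}

theorem apply_smul (f : equivariantEnd ρ) (h : H) (v : V) : ρ h (f • v) = f • ρ h v :=
  DFunLike.congr_fun (Subring.mem_centralizer_iff.mp f.2 _ ⟨h, rfl⟩) v

variable (ρ) in
/-- The action of the centre of `H`, by equivariant endomorphisms. -/
def ofCenter : center H →* equivariantEnd ρ :=
  (ρ.comp (center H).subtype).codRestrict _ fun z => by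
    rw [equivariantEnd, Subring.mem_centralizer_iff]
    rintro _ ⟨h, rfl⟩
    exact (map_mul ρ _ _).symm.trans
      ((congrArg ρ (mem_center_iff.mp z.2 h)).trans (map_mul ρ _ _))

theorem smul_eq_zero_iff_of_transitive (htrans : ∀ v w : V, v ≠ 0 → w ≠ 0 → ∃ h, ρ h v = w)
    {f : equivariantEnd ρ} {v : V} : f • v = 0 ↔ f = 0 ∨ v = 0 := by
  refine ⟨fun hf => or_iff_not_imp_right.mpr fun hv => Subtype.ext (AddMonoidHom.ext fun w => ?_),
    ?_⟩
  · obtain rfl | hw := eq_or_ne w 0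
    · exact map_zero f.1
    · obtain ⟨h, rfl⟩ := htrans v w hv hw
      exact (apply_smul f h v).symm.trans (by rw [hf, map_zero]; rfl)
  · rintro (rfl | rfl)
    · exact zero_smul _ v
    · exact smul_zero f

theorem isField_of_transitive [Finite V] [Nontrivial V]
    (htrans : ∀ v w : V, v ≠ 0 → w ≠ 0 → ∃ h, ρ h v = w) : IsField (equivariantEnd ρ) := by
  obtain ⟨v, hv⟩ := exists_ne (0 : V)
  have : Finite (AddMonoid.End V) := DFunLike.finite _
  have : Nontrivial (equivariantEnd ρ) :=
    ⟨0, 1, fun h => hv (by rw [← one_smul (equivariantEnd ρ) v, ← h, zero_smul])⟩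
  have : NoZeroDivisors (equivariantEnd ρ) := ⟨fun {f g} hfg => by
    have hfgv : f • g • v = 0 := by rw [smul_smul, hfg, zero_smul]
    rcases (smul_eq_zero_iff_of_transitive htrans).mp hfgv with hf | hgv
    · exact Or.inl hf
    · exact Or.inr (((smul_eq_zero_iff_of_transitive htrans).mp hgv).resolve_right hv)⟩
  have : IsDomain (equivariantEnd ρ) := NoZeroDivisors.to_isDomain _
  exact Finite.isDomain_to_isField _

end equivariantEnd

open equivariantEnd

/-- By Schur's lemma and Wedderburn's little theorem `V` is a vector space over the field of
equivariant endomorphisms, which contains the centre of `H`. In dimension one `H` would embed in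
the multiplicative group of this field. -/
theorem sq_card_center_add_one_le_card [Finite V] [Nontrivial V] (hinj : Function.Injective ρ)
    (htrans : ∀ v w : V, v ≠ 0 → w ≠ 0 → ∃ h, ρ h v = w) (hcomm : ¬ IsMulCommutative H) :
    (Nat.card (center H) + 1) ^ 2 ≤ Nat.card V := by
  have : Finite (AddMonoid.End V) := DFunLike.finite _
  have : Finite H := Finite.of_injective ρ hinj
  let _ : Field (equivariantEnd ρ) := (isField_of_transitive htrans).toField
  have hcard : Nat.card (center H) + 1 ≤ Nat.card (equivariantEnd ρ) := by
    have hinj' : Function.Injective (ofCenter ρ).toHomUnits := fun y z hyz =>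
      Subtype.ext (hinj (congrArg Subtype.val (congrArg Units.val hyz)))
    rw [Nat.card_eq_card_units_add_one (α := equivariantEnd ρ)]
    exact Nat.add_le_add_right (Nat.card_le_card_of_injective _ hinj') 1
  have hrank : 2 ≤ Module.finrank (equivariantEnd ρ) V := by
    have hpos : 0 < Module.finrank (equivariantEnd ρ) V := Module.finrank_pos
    have hne : Module.finrank (equivariantEnd ρ) V ≠ 1 := fun h1 => by
      refine hcomm ⟨⟨fun g h => hinj (AddMonoidHom.ext fun v => ?_)⟩⟩
      obtain rfl | hv := eq_or_ne v 0
      · exact (AddMonoidHom.map_zero (ρ (g * h))).trans (AddMonoidHom.map_zero (ρ (h * g))).symm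
      obtain ⟨a, ha⟩ := (finrank_eq_one_iff_of_nonzero' v hv).mp h1 (ρ g v)
      obtain ⟨b, hb⟩ := (finrank_eq_one_iff_of_nonzero' v hv).mp h1 (ρ h v)
      calc ρ (g * h) v = ρ g (ρ h v) := by rw [map_mul]; rfl
        _ = b • a • v := by rw [← hb, apply_smul, ha]
        _ = a • b • v := smul_comm b a v
        _ = ρ h (ρ g v) := by rw [← ha, apply_smul, hb]
        _ = ρ (h * g) v := by rw [map_mul]; rfl
    omega
  calc (Nat.card (center H) + 1) ^ 2
      ≤ Nat.card (equivariantEnd ρ) ^ 2 := Nat.pow_le_pow_left hcard 2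
    _ ≤ Nat.card (equivariantEnd ρ) ^ Module.finrank (equivariantEnd ρ) V :=
        Nat.pow_le_pow_right Nat.card_pos hrank
    _ = Nat.card V := (Module.natCard_eq_pow_finrank (K := equivariantEnd ρ)).symm

end TransitiveLinearAction

section FixedPointFreeActions

variable {H K : Type*} [Group H] [Group K] [MulDistribMulAction H K]

variable (H K) in
/-- The action of `H` on the group `K` by automorphisms is *fixed-point-free*: no nontrivial element
of `H` fixes a nontrivial element of `K`. -/
def IsFixedPointFreeAction : Prop :=
  ∀ h : H, h ≠ 1 → MonoidHom.FixedPointFree (h • · : K → K)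

/-- The restriction of an action by automorphisms to an invariant subgroup. -/
abbrev restrictAction (W : Subgroup K) (hW : ∀ (h : H), ∀ w ∈ W, h • w ∈ W) :
    MulDistribMulAction H W where
  smul h w := ⟨h • w, hW h w w.2⟩
  one_smul w := Subtype.ext (one_smul H (w : K))
  mul_smul g h w := Subtype.ext (mul_smul g h (w : K))
  smul_one h := Subtype.ext (smul_one h)
  smul_mul h v w := Subtype.ext (smul_mul' h (v : K) w)

theorem smul_mem_of_characteristic (W : Subgroup K) [hW : W.Characteristic] (h : H) {w : K}
    (hw : w ∈ W) : h • w ∈ W :=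
  characteristic_iff_le_comap.mp hW (MulDistribMulAction.toMulEquiv K h) hw

namespace IsFixedPointFreeAction

theorem restrict (hfree : IsFixedPointFreeAction H K) (W : Subgroup K)
    (hW : ∀ (h : H), ∀ w ∈ W, h • w ∈ W) :
    letI := restrictAction W hW
    IsFixedPointFreeAction H W :=
  fun h hh w hw => Subtype.ext (hfree h hh w (congrArg Subtype.val hw))

theorem subgroup (hfree : IsFixedPointFreeAction H K) (P : Subgroup H) :
    IsFixedPointFreeAction P K :=
  fun g hg => hfree g fun h => hg (Subtype.ext h)

theorem smul_left_injective (hfree : IsFixedPointFreeAction H K) {k : K} (hk : k ≠ 1) :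
    Function.Injective (· • k : H → K) := fun g h hgh => by
  by_contra hne
  refine hk (hfree (h⁻¹ * g) (fun h1 => hne (inv_mul_eq_one.mp h1).symm) k ?_)
  exact (mul_smul _ _ _).trans (inv_smul_eq_iff.mpr hgh)

theorem card_dvd_ncard (hfree : IsFixedPointFreeAction H K) {s : Set K}
    (hs : ∀ (h : H), ∀ k ∈ s, h • k ∈ s) (h1 : (1 : K) ∉ s) : Nat.card H ∣ s.ncard := by
  let t : SubMulAction H K := ⟨s, fun h _ hk => hs h _ hk⟩
  have hstab (k : t) : MulAction.stabilizer H k = ⊥ :=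
    (eq_bot_iff_forall _).mpr fun h hh => hfree.smul_left_injective (fun hk => h1 (hk ▸ k.2))
      ((congrArg Subtype.val hh).trans (one_smul H (k : K)).symm)
  rw [← Nat.card_coe_set_eq]
  change Nat.card H ∣ Nat.card t
  rw [Nat.card_congr (MulAction.selfEquivOrbitsQuotientProd hstab), Nat.card_prod]
  exact dvd_mul_left _ _

theorem card_dvd_orderCount (hfree : IsFixedPointFreeAction H K) {n : ℕ} (hn : 1 < n) :
    Nat.card H ∣ orderCount K n :=
  hfree.card_dvd_ncard (s := {k | orderOf k = n})
    (fun h k hk => ((MulDistribMulAction.toMulEquiv K h).orderOf_eq k).trans hk)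
    (fun h => hn.ne (orderOf_one.symm.trans h))

theorem coprime_card [Finite K] (hfree : IsFixedPointFreeAction H K) :
    (Nat.card K).Coprime (Nat.card H) := by
  have hdvd : Nat.card H ∣ ({1}ᶜ : Set K).ncard :=
    hfree.card_dvd_ncard
      (fun h _ hk => (MulDistribMulAction.toMulEquiv K h).map_eq_one_iff.not.mpr hk)
      (fun h => h rfl)
  obtain ⟨t, ht⟩ := hdvd
  rw [← Set.ncard_add_ncard_compl ({1} : Set K), Set.ncard_singleton, ht,
    Nat.coprime_add_mul_left_left]
  exact Nat.coprime_one_left _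

theorem exists_smul_eq_of_card_eq [Finite K] (hfree : IsFixedPointFreeAction H K)
    (hcard : Nat.card K = Nat.card H + 1) {v w : K} (hv : v ≠ 1) (hw : w ≠ 1) :
    ∃ h : H, h • v = w := by
  have hrange : Set.range (· • v : H → K) = {1}ᶜ := by
    refine Set.eq_of_subset_of_ncard_le ?_ ?_
    · rintro _ ⟨h, rfl⟩
      exact (MulDistribMulAction.toMulEquiv K h).map_eq_one_iff.not.mpr hv
    · rw [Set.ncard_compl, Set.ncard_singleton, hcard, ← Set.image_univ,
        Set.ncard_image_of_injective _ (hfree.smul_left_injective hv), Set.ncard_univ,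
        Nat.add_sub_cancel]
  exact hrange.ge hw

section CommGroup

variable {V : Type*} [CommGroup V] [MulDistribMulAction H V]

theorem prod_pow_smul_eq_one (hfree : IsFixedPointFreeAction H V) {g : H} (hg : g ≠ 1) {n : ℕ}
    (hgn : g ^ n = 1) (v : V) : ∏ i ∈ Finset.range n, g ^ i • v = 1 := by
  refine hfree g hg _ ?_
  simp only [Finset.smul_prod', smul_smul, ← pow_succ']
  have h := Finset.prod_range_succ (fun i => g ^ i • v) n
  rw [Finset.prod_range_succ', hgn, pow_zero] at h
  exact mul_right_cancel h

/-- The `p + 1` subgroups of order `p` of `⟨x, y⟩ ≅ C_p × C_p` intersect trivially and each has norm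
`1` on `V`. Multiplying these norms over all subgroups but `⟨y⟩` leaves `v ^ p` times powers of the
norm of `⟨y⟩`. -/
theorem pow_prime_eq_one (hfree : IsFixedPointFreeAction H V) {p : ℕ} (hp : p.Prime) {x y : H}
    (hx : orderOf x = p) (hy : orderOf y = p) (hxy : Commute x y) (hmem : y ∉ zpowers x) (v : V) :
    v ^ p = 1 := by
  have hxp : x ^ p = 1 := hx ▸ pow_orderOf_eq_one x
  have hyp (i : ℕ) : (y ^ i) ^ p = 1 := by rw [pow_right_comm, ← hy, pow_orderOf_eq_one, one_pow]
  have hcop {i : ℕ} (hi : i ∈ Finset.range p) (hi0 : i ≠ 0) : p.Coprime i :=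
    Nat.coprime_of_lt_prime hi0 (Finset.mem_range.mp hi) hp
  have hxyj (j : ℕ) (hj : j ∈ Finset.range p) : x * y ^ j ≠ 1 := by
    intro h
    obtain rfl | hj0 := eq_or_ne j 0
    · rw [pow_zero, mul_one] at h
      exact hp.ne_one (hx.symm.trans (orderOf_eq_one_iff.mpr h))
    · obtain ⟨m, hm⟩ := exists_pow_eq_self_of_coprime (x := y) (n := j) (hy ▸ (hcop hj hj0).symm)
      rw [← hm, eq_inv_of_mul_eq_one_right h] at hmem
      exact hmem (Subgroup.pow_mem _ (inv_mem (mem_zpowers x)) m)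
  have hinner (i : ℕ) (hi : i ∈ Finset.range p) (hi0 : i ≠ 0) :
      ∏ j ∈ Finset.range p, (x * y ^ j) ^ i • v = 1 := by
    have hyi : y ^ i ≠ 1 := fun h => hp.ne_one
      (Nat.eq_one_of_dvd_coprimes (hcop hi hi0) dvd_rfl (hy ▸ orderOf_dvd_of_pow_eq_one h))
    simp only [(hxy.pow_right _).mul_pow, pow_right_comm y _ i, mul_smul]
    rw [← Finset.smul_prod', prod_pow_smul_eq_one hfree hyi (hyp i), smul_one]
  calc v ^ p = ∏ j ∈ Finset.range p, (x * y ^ j) ^ 0 • v := by simp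
    _ = ∏ i ∈ Finset.range p, ∏ j ∈ Finset.range p, (x * y ^ j) ^ i • v :=
      (Finset.prod_eq_single_of_mem 0 (Finset.mem_range.mpr hp.pos) hinner).symm
    _ = ∏ j ∈ Finset.range p, ∏ i ∈ Finset.range p, (x * y ^ j) ^ i • v := Finset.prod_comm
    _ = 1 := Finset.prod_eq_one fun j hj => prod_pow_smul_eq_one hfree (hxyj j hj)
      (by rw [(hxy.pow_right j).mul_pow, hxp, hyp, one_mul]) v

end CommGroup

open scoped IsMulCommutative in
theorem pRankLEOne [Finite K] [Nontrivial K] {p : ℕ} [hp : Fact p.Prime]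
    (hfree : IsFixedPointFreeAction H K) (hH : IsPGroup p H) : PRankLEOne p H := by
  intro x y hx hy hxy
  by_contra hmem
  have hpK : ¬ p ∣ Nat.card K := fun h => hp.out.ne_one
    (Nat.eq_one_of_dvd_coprimes hfree.coprime_card h (hx ▸ orderOf_dvd_natCard x))
  obtain ⟨q, hq, hqK⟩ := Nat.exists_prime_and_dvd (Finite.one_lt_card (α := K)).ne'
  have : Fact q.Prime := ⟨hq⟩
  have hsyl : ¬ p ∣ Nat.card (Sylow q K) := fun h =>
    hpK (h.trans ((default : Sylow q K).card_dvd_index.trans (index_dvd_card _)))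
  obtain ⟨Q, hQ⟩ := hH.nonempty_fixed_point_of_prime_not_dvd_card (Sylow q K) hsyl
  have hQmem (g : H) (k : K) (hk : k ∈ (Q : Subgroup K)) : g • k ∈ (Q : Subgroup K) := by
    have h := smul_mem_pointwise_smul k g (Q : Subgroup K) hk
    rwa [← Sylow.pointwise_smul_def, hQ g] at h
  let _ := restrictAction (Q : Subgroup K) hQmem
  let _ := restrictAction (center Q) fun (g : H) _ hz => smul_mem_of_characteristic (center Q) g hz
  have hfreeZ : IsFixedPointFreeAction H (center Q) :=
    IsFixedPointFreeAction.restrict (hfree.restrict (Q : Subgroup K) hQmem) (center Q) _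
  have : Nontrivial Q := (nontrivial_iff_ne_bot _).mpr (Q.ne_bot_of_dvd_card hqK)
  have : Nontrivial (center Q) := Q.2.center_nontrivial
  obtain ⟨z, hz⟩ := exists_ne (1 : center Q)
  have hzp : z ^ p = 1 := hfreeZ.pow_prime_eq_one hp.out hx hy hxy hmem z
  have hpZ : p ∣ Nat.card (center Q) := by
    rw [← orderOf_eq_prime hzp hz]
    exact orderOf_dvd_natCard z
  exact hpK ((hpZ.trans (card_subgroup_dvd_card _)).trans (card_subgroup_dvd_card _))

end IsFixedPointFreeAction

end FixedPointFreeActions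

namespace IsFixedPointFreeAction

variable {H V : Type*} [Group H] [CommGroup V] [Finite V] [MulDistribMulAction H V]

theorem sq_card_center_add_one_le [Finite H] (hfree : IsFixedPointFreeAction H V)
    (hcard : Nat.card V = Nat.card H + 1) (hcomm : ¬ IsMulCommutative H) :
    (Nat.card (center H) + 1) ^ 2 ≤ Nat.card H + 1 := by
  have : Nontrivial V := Finite.one_lt_card_iff_nontrivial.mp
    (hcard ▸ Nat.lt_add_of_pos_left Nat.card_pos)
  obtain ⟨v, hv⟩ := exists_ne (1 : V)
  rw [← hcard]
  exact sq_card_center_add_one_le_card (V := Additive V)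
    ((monoidEndToAdditive V).toMonoidHom.comp (MulDistribMulAction.toMonoidEnd H V))
    (fun g h hgh => hfree.smul_left_injective hv (DFunLike.congr_fun hgh (Additive.ofMul v)))
    (fun _ _ => hfree.exists_smul_eq_of_card_eq hcard) hcomm

theorem exists_isPGroup [Finite H] [Nontrivial H] [Nontrivial V]
    (hfree : IsFixedPointFreeAction H V)
    (hdvd : ∀ n, 1 < n → orderCount V n = 0 ∨ orderCount V n ∣ Nat.card V * Nat.card H) :
    ∃ p, p.Prime ∧ IsPGroup p V := by
  obtain ⟨p, hp, hpV⟩ := Nat.exists_prime_and_dvd (Finite.one_lt_card (α := V)).ne'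
  refine ⟨p, hp, IsPGroup.of_card (Nat.eq_prime_pow_of_unique_prime_dvd Nat.card_pos.ne' ?_)⟩
  intro q hq hqV
  by_contra hqp
  have hmul := orderCount_mul_of_coprime (A := V) hp.pos hq.pos
    ((Nat.coprime_primes hp hq).mpr (Ne.symm hqp))
  have hpos : 0 < orderCount V (p * q) := hmul ▸
    Nat.mul_pos (orderCount_pos_of_prime_dvd hp hpV) (orderCount_pos_of_prime_dvd hq hqV)
  have hsq : Nat.card H * Nat.card H ∣ Nat.card V * Nat.card H :=
    calc Nat.card H * Nat.card H ∣ orderCount V p * orderCount V q :=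
          mul_dvd_mul (hfree.card_dvd_orderCount hp.one_lt) (hfree.card_dvd_orderCount hq.one_lt)
      _ = orderCount V (p * q) := hmul.symm
      _ ∣ Nat.card V * Nat.card H :=
          (hdvd _ (one_lt_mul'' hp.one_lt hq.one_lt)).resolve_left hpos.ne'
  exact Finite.one_lt_card.ne' (Nat.eq_one_of_dvd_coprimes hfree.coprime_card
    (Nat.dvd_of_mul_dvd_mul_right Nat.card_pos hsq) dvd_rfl)

theorem orderCount_eq_card [Nontrivial V] (hfree : IsFixedPointFreeAction H V) {p : ℕ}
    (hp : p.Prime) (hV : IsPGroup p V) (hdvd : orderCount V p ∣ Nat.card V * Nat.card H) :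
    orderCount V p = Nat.card H := by
  have : Fact p.Prime := ⟨hp⟩
  obtain ⟨e, he⟩ := hV.exists_card_eq
  have hker : p ∣ orderCount V p + 1 := by
    rw [← card_ker_powMonoidHom hp]
    refine (hV.to_subgroup _).card_eq_or_dvd.resolve_left ?_
    rw [card_ker_powMonoidHom hp]
    exact (Nat.succ_lt_succ (orderCount_pos_of_isPGroup hp hV)).ne'
  have hcop : (orderCount V p).Coprime (Nat.card V) := by
    rw [he]
    exact (((Nat.coprime_self_add_right).mpr (Nat.coprime_one_right _)).coprime_dvd_right
      hker).pow_right e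
  exact Nat.dvd_antisymm (hcop.dvd_of_dvd_mul_left hdvd) (hfree.card_dvd_orderCount hp.one_lt)

/-- The subgroup of `V` killed by `p` has order `Nat.card H + 1`, and `H` acts transitively on its
nontrivial elements. -/
theorem sq_card_center_add_one_le_of_orderCount_dvd [Finite H] [Nontrivial V]
    (hfree : IsFixedPointFreeAction H V)
    (hdvd : ∀ n, 1 < n → orderCount V n = 0 ∨ orderCount V n ∣ Nat.card V * Nat.card H)
    (hcomm : ¬ IsMulCommutative H) : (Nat.card (center H) + 1) ^ 2 ≤ Nat.card H + 1 := by
  have : Nontrivial H := by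
    by_contra h
    rw [not_nontrivial_iff_subsingleton] at h
    exact hcomm inferInstance
  obtain ⟨p, hp, hV⟩ := hfree.exists_isPGroup hdvd
  have hpos := orderCount_pos_of_isPGroup hp hV
  have hcard : Nat.card (powMonoidHom p : V →* V).ker = Nat.card H + 1 := by
    rw [card_ker_powMonoidHom hp,
      hfree.orderCount_eq_card hp hV ((hdvd p hp.one_lt).resolve_left hpos.ne')]
  let _ := restrictAction (powMonoidHom p : V →* V).ker fun (h : H) v hv => by
    rw [MonoidHom.mem_ker, powMonoidHom_apply] at hv ⊢
    rw [← smul_pow', hv, smul_one]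
  exact IsFixedPointFreeAction.sq_card_center_add_one_le (hfree.restrict _ _) hcard hcomm

end IsFixedPointFreeAction

section NilpotentGroups

variable {H : Type*} [Group H] [Finite H]

theorem mem_center_of_mem_sylow [Group.IsNilpotent H] {p : ℕ} [hp : Fact p.Prime] (P : Sylow p H)
    {x : H} (hx : x ∈ P) (hcomm : ∀ y ∈ P, Commute x y) : x ∈ center H := by
  have hsylow (q : ℕ) (hq : q.Prime) : ∃ Q : Sylow q H, (Q : Subgroup H) ≤ centralizer {x} := by
    have : Fact q.Prime := ⟨hq⟩
    obtain rfl | hpq := eq_or_ne p q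
    · exact ⟨P, fun y hy => mem_centralizer_singleton_iff.mpr (hcomm y hy).symm⟩
    · refine ⟨default, fun y hy => mem_centralizer_singleton_iff.mpr ?_⟩
      exact (commute_of_normal_of_disjoint (P : Subgroup H) (default : Sylow q H) inferInstance
        inferInstance (IsPGroup.disjoint_of_ne p q hpq _ _ P.2 (default : Sylow q H).2) x y hx
        hy).symm
  have htop : centralizer {x} = ⊤ := by
    rw [← index_eq_one, Nat.eq_one_iff_not_exists_prime_dvd]
    intro q hq hdvd
    have : Fact q.Prime := ⟨hq⟩
    obtain ⟨Q, hQ⟩ := hsylow q hq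
    exact Q.not_dvd_index (hdvd.trans (index_dvd_of_le hQ))
  exact mem_center_iff.mpr fun g =>
    mem_centralizer_singleton_iff.mp ((eq_top_iff' _).mp htop g)

theorem prime_dvd_card_center [Group.IsNilpotent H] {p : ℕ} (hp : p.Prime)
    (h : p ∣ Nat.card H) : p ∣ Nat.card (center H) := by
  have : Fact p.Prime := ⟨hp⟩
  let P : Sylow p H := default
  have : Nontrivial P := (nontrivial_iff_ne_bot _).mpr (P.ne_bot_of_dvd_card h)
  obtain ⟨z, -, hz, hzP⟩ := exists_orderOf_eq_mem_center P.2 ⊤ top_ne_bot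
  have hzH : (z : H) ∈ center H := mem_center_of_mem_sylow P z.2 fun y hy =>
    (congrArg Subtype.val (mem_center_iff.mp hzP ⟨y, hy⟩)).symm
  rw [← hz, ← orderOf_coe, ← orderOf_mk _ hzH]
  exact orderOf_dvd_natCard _

theorem dvd_card_center_of_isMulCommutative_sylow [Group.IsNilpotent H] {m : ℕ}
    (hm : m ∣ Nat.card H)
    (hcomm : ∀ q, q.Prime → q ∣ m → ∀ Q : Sylow q H, IsMulCommutative Q) :
    m ∣ Nat.card (center H) := by
  rw [Nat.dvd_iff_prime_pow_dvd_dvd]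
  intro q k hq hk
  have : Fact q.Prime := ⟨hq⟩
  obtain rfl | hk0 := eq_or_ne k 0
  · exact one_dvd _
  let Q : Sylow q H := default
  have := hcomm q hq ((dvd_pow_self q hk0).trans hk) Q
  have hQ : (Q : Subgroup H) ≤ center H := fun x hx => mem_center_of_mem_sylow Q hx fun y hy =>
    congrArg Subtype.val (IsMulCommutative.is_comm.comm (⟨x, hx⟩ : Q) ⟨y, hy⟩)
  exact (Q.pow_dvd_card_of_pow_dvd_card (hk.trans hm)).trans (card_dvd_of_le hQ)

theorem orderCount_prime_pow_eq_orderCount_sylow {p : ℕ} [hp : Fact p.Prime] (P : Sylow p H)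
    [hP : (P : Subgroup H).Normal] (k : ℕ) : orderCount H (p ^ k) = orderCount P (p ^ k) := by
  refine orderCount_eq_of_forall_mem fun g hg => ?_
  have hpg : IsPGroup p (zpowers g) := IsPGroup.of_card (by rw [Nat.card_zpowers, hg])
  obtain ⟨Q, hQ⟩ := hpg.exists_le_sylow
  have := P.unique_of_normal hP
  rw [Subsingleton.elim P Q]
  exact hQ (mem_zpowers g)

open scoped IsMulCommutative in
theorem isCyclic_of_isMulCommutative_of_pRankLEOne [IsMulCommutative H]
    (hr : ∀ p [Fact p.Prime] (P : Sylow p H), PRankLEOne p P) : IsCyclic H := by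
  have : IsZGroup H := ⟨fun p hp P =>
    have : Fact p.Prime := ⟨hp⟩
    (hr p P).isCyclic_of_isMulCommutative P.2⟩
  infer_instance

theorem card_and_orderCount_four_of_pRankLEOne [Group.IsNilpotent H]
    (hr : ∀ p [Fact p.Prime] (P : Sylow p H), PRankLEOne p P) (hcyc : ¬ IsCyclic H) :
    ∃ c m, Even c ∧ Nat.card H = 4 * c * m ∧ orderCount H 4 = 2 * (c + 1) ∧
      2 * m ∣ Nat.card (center H) := by
  have hodd (p : ℕ) (hp : p.Prime) (hp2 : p ≠ 2) (P : Sylow p H) : IsCyclic P :=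
    have : Fact p.Prime := ⟨hp⟩
    (hr p P).isCyclic_of_odd P.2 (hp.odd_of_ne_two hp2)
  let Q : Sylow 2 H := default
  have hQ : ¬ IsCyclic Q := fun hQ => hcyc <| by
    have : IsZGroup H := ⟨fun p hp P => by
      obtain rfl | hp2 := eq_or_ne p 2
      · have := Q.unique_of_normal inferInstance
        rwa [Subsingleton.elim P Q]
      · exact hodd p hp hp2 P⟩
    infer_instance
  obtain ⟨c, hc, hQcard, hQ4⟩ := (hr 2 Q).card_and_orderCount_four Q.2 hQ
  let m := (Q : Subgroup H).index
  have hcard : Nat.card H = 4 * c * m := by rw [← hQcard, card_mul_index]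
  have hm2 : ¬ 2 ∣ m := Q.not_dvd_index
  refine ⟨c, m, hc, hcard, (orderCount_prime_pow_eq_orderCount_sylow Q 2).trans hQ4, ?_⟩
  refine Nat.Coprime.mul_dvd_of_dvd_of_dvd ((Nat.prime_two.coprime_iff_not_dvd).mpr hm2) ?_ ?_
  · refine prime_dvd_card_center Nat.prime_two ?_
    rw [hcard, show 4 * c * m = 2 * (2 * c * m) by ring]
    exact dvd_mul_right _ _
  · refine dvd_card_center_of_isMulCommutative_sylow (hcard ▸ dvd_mul_left m _) ?_
    intro q hq hqm P
    have := hodd q hq (fun h => hm2 (h ▸ hqm)) P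
    infer_instance

end NilpotentGroups

theorem not_dvd_of_sq_le {c m : ℕ} (hc : Even c) (hm : 0 < m)
    (hle : (2 * m + 1) ^ 2 ≤ 4 * c * m + 1) : ¬ 2 * (c + 1) ∣ 4 * c * m := by
  intro hdvd
  have hcop : (c + 1).Coprime (2 * c) :=
    Nat.Coprime.mul_right (Nat.coprime_two_right.mpr hc.add_one) (by simp)
  have hcm : c + 1 ∣ m := hcop.dvd_of_dvd_mul_left <|
    Nat.dvd_of_mul_dvd_mul_left two_pos (by convert hdvd using 1; ring)
  have hlt : c < m := Nat.le_of_dvd hm hcm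
  nlinarith

namespace IsFrobeniusWith

variable {G : Type*} [Group G] {K H : Subgroup G}

theorem normal (hF : IsFrobeniusWith K H) : K.Normal := hF.2.2.1

theorem isComplement' (hF : IsFrobeniusWith K H) : IsComplement' K H := by
  refine ⟨mul_injective_of_disjoint (disjoint_iff.mpr hF.2.2.2.1), fun g => ?_⟩
  obtain ⟨k, hk, h, hh, rfl⟩ := hF.2.2.2.2.1 g
  exact ⟨(⟨k, hk⟩, ⟨h, hh⟩), rfl⟩

/-- The action of a Frobenius complement on the Frobenius kernel by conjugation. -/
noncomputable abbrev conjAction (hF : IsFrobeniusWith K H) : MulDistribMulAction H K :=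
  have := hF.normal
  MulDistribMulAction.compHom K ((MulAut.conjNormal (H := K)).comp H.subtype)

theorem coe_conjAction_smul (hF : IsFrobeniusWith K H) (h : H) (k : K) :
    letI := hF.conjAction
    ((h • k : K) : G) = h * k * (h : G)⁻¹ :=
  have := hF.normal
  MulAut.conjNormal_apply (H := K) (h : G) k

theorem isFixedPointFreeAction (hF : IsFrobeniusWith K H) :
    letI := hF.conjAction
    IsFixedPointFreeAction H K := by
  intro h hh k hk
  by_contra hne
  refine hF.2.2.2.2.2 h h.2 (fun h1 => hh (Subtype.ext h1)) k k.2
    (fun h1 => hne (Subtype.ext h1)) ?_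
  rw [← hF.coe_conjAction_smul]
  exact congrArg Subtype.val hk

/-- Fixed-point-freeness makes `c ↦ c * (h • c)⁻¹` surjective on the finite group `K`, so that
`k * h` is conjugate to `h`. -/
theorem orderOf_mul [Finite G] (hF : IsFrobeniusWith K H) (k : K) {h : H} (hh : h ≠ 1) :
    orderOf (k * h : G) = orderOf h := by
  let _ := hF.conjAction
  have hfree : MonoidHom.FixedPointFree (MulDistribMulAction.toMonoidHom K h) :=
    hF.isFixedPointFreeAction h hh
  obtain ⟨c, hc⟩ := hfree.commutatorMap_surjective k
  have hconj : (k * h : G) = c * h * (c : G)⁻¹ := by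
    rw [← hc, MonoidHom.commutatorMap_apply, coe_div, MulDistribMulAction.toMonoidHom_apply,
      hF.coe_conjAction_smul, div_eq_mul_inv]
    group
  rw [hconj, ← orderOf_coe h]
  exact (MulAut.conj (c : G)).orderOf_eq h

theorem orderCount_eq [Finite G] (hF : IsFrobeniusWith K H) {n : ℕ} (hn : n ≠ 1) :
    orderCount G n = orderCount K n + Nat.card K * orderCount H n := by
  have himage : {g | g ∉ K ∧ orderOf g = n} =
      (fun x : K × H => (x.1 : G) * x.2) '' (Set.univ ×ˢ {h : H | orderOf h = n}) := by
    ext g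
    constructor
    · rintro ⟨hgK, hgn⟩
      obtain ⟨⟨k, h⟩, rfl⟩ := hF.isComplement'.2 g
      have hh : h ≠ 1 := fun hh => hgK (by simp [hh])
      exact ⟨(k, h), ⟨Set.mem_univ k, (hF.orderOf_mul k hh).symm.trans hgn⟩, rfl⟩
    · rintro ⟨⟨k, h⟩, ⟨-, hhn⟩, rfl⟩
      have hh : h ≠ 1 := fun hh => hn (hhn.symm.trans (orderOf_eq_one_iff.mpr hh))
      refine ⟨fun hkh => hh (Subtype.ext ?_), (hF.orderOf_mul k hh).trans hhn⟩
      exact mem_bot.mp (hF.2.2.2.1 ▸ ⟨(mul_mem_cancel_left k.2).mp hkh, h.2⟩)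
  have hinj : Function.Injective fun x : K × H => (x.1 : G) * x.2 := hF.isComplement'.1
  rw [orderCount_eq_add_ncard_notMem K, himage, Set.ncard_image_of_injective _ hinj,
    Set.ncard_prod, Set.ncard_univ]
  rfl

theorem coprime_card [Finite G] (hF : IsFrobeniusWith K H) :
    (Nat.card K).Coprime (Nat.card H) :=
  let _ := hF.conjAction
  hF.isFixedPointFreeAction.coprime_card

theorem orderCount_kernel_eq_zero_or_orderCount_complement_eq_zero [Finite G]
    (hF : IsFrobeniusWith K H) {n : ℕ} (hn : n ≠ 1) : orderCount K n = 0 ∨ orderCount H n = 0 := by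
  by_contra! h
  exact hn (Nat.eq_one_of_dvd_coprimes hF.coprime_card (dvd_card_of_orderCount_ne_zero h.1)
    (dvd_card_of_orderCount_ne_zero h.2))

theorem orderCount_kernel_dvd [Finite G] (hF : IsFrobeniusWith K H) (hG : PerfectOrderClasses G)
    {n : ℕ} (hn : 1 < n) : orderCount K n = 0 ∨ orderCount K n ∣ Nat.card K * Nat.card H := by
  refine or_iff_not_imp_left.mpr fun hK => ?_
  have hH := (hF.orderCount_kernel_eq_zero_or_orderCount_complement_eq_zero hn.ne').resolve_left hK
  have h := hG n (Nat.zero_lt_of_lt hn)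
  rw [hF.orderCount_eq hn.ne', hH, mul_zero, add_zero, ← hF.isComplement'.card_mul_card] at h
  exact h.resolve_left hK

theorem orderCount_complement_dvd [Finite G] (hF : IsFrobeniusWith K H)
    (hG : PerfectOrderClasses G) {n : ℕ} (hn : 1 < n) :
    orderCount H n = 0 ∨ orderCount H n ∣ Nat.card H := by
  refine or_iff_not_imp_left.mpr fun hH => ?_
  have hK := (hF.orderCount_kernel_eq_zero_or_orderCount_complement_eq_zero hn.ne').resolve_right hH
  have h := hG n (Nat.zero_lt_of_lt hn)
  rw [hF.orderCount_eq hn.ne', hK, zero_add, ← hF.isComplement'.card_mul_card] at h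
  exact Nat.dvd_of_mul_dvd_mul_left Nat.card_pos
    (h.resolve_left (Nat.mul_ne_zero Nat.card_pos.ne' hH))

theorem nontrivial_kernel (hF : IsFrobeniusWith K H) : Nontrivial K :=
  (nontrivial_iff_ne_bot _).mpr hF.1

theorem pRankLEOne_sylow_complement [Finite G] (hF : IsFrobeniusWith K H) (p : ℕ) [Fact p.Prime]
    (P : Sylow p H) : PRankLEOne p P :=
  let _ := hF.conjAction
  have := hF.nontrivial_kernel
  (hF.isFixedPointFreeAction.subgroup P).pRankLEOne P.2

theorem isMulCommutative_kernel [Finite G] (hF : IsFrobeniusWith K H) (h2 : 2 ∣ Nat.card H) :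
    IsMulCommutative K := by
  let _ := hF.conjAction
  have : Fact (Nat.Prime 2) := ⟨Nat.prime_two⟩
  obtain ⟨z, hz⟩ := exists_prime_orderOf_dvd_card' 2 h2
  obtain ⟨hz2, hz1⟩ := orderOf_eq_prime_iff.mp hz
  have hfree : MonoidHom.FixedPointFree (MulDistribMulAction.toMonoidHom K z) :=
    hF.isFixedPointFreeAction z hz1
  refine ⟨⟨hfree.commute_all_of_involutive fun k => ?_⟩⟩
  rw [MulDistribMulAction.toMonoidHom_apply, MulDistribMulAction.toMonoidHom_apply, smul_smul,
    ← sq, hz2, one_smul]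

open scoped IsMulCommutative in
theorem sq_card_center_complement_add_one_le [Finite G] (hF : IsFrobeniusWith K H)
    (hG : PerfectOrderClasses G) (h2 : 2 ∣ Nat.card H) (hcomm : ¬ IsMulCommutative H) :
    (Nat.card (center H) + 1) ^ 2 ≤ Nat.card H + 1 := by
  let _ := hF.conjAction
  have := hF.nontrivial_kernel
  have := hF.isMulCommutative_kernel h2
  exact hF.isFixedPointFreeAction.sq_card_center_add_one_le_of_orderCount_dvd
    (fun _ => hF.orderCount_kernel_dvd hG) hcomm

end IsFrobeniusWith

/-- A nilpotent Frobenius complement in a finite Frobenius group with perfect order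
classes is cyclic. -/
theorem frobenius_perfectOrderClasses_nilpotent_complement_isCyclic
    {G : Type*} [Group G] [Fintype G] (K H : Subgroup G)
    (hFrob : IsFrobeniusWith K H) (hpoc : PerfectOrderClasses G)
    (hnil : Group.IsNilpotent H) :
    IsCyclic H := by
  by_contra hcyc
  have hr := hFrob.pRankLEOne_sylow_complement
  obtain ⟨c, m, hc, hcard, hfour, hZ⟩ := card_and_orderCount_four_of_pRankLEOne hr hcyc
  have hpos : 0 < 4 * c * m := hcard ▸ Nat.card_pos
  have hdvd : 2 * (c + 1) ∣ 4 * c * m := hfour ▸ hcard ▸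
    (hFrob.orderCount_complement_dvd hpoc (by norm_num)).resolve_left (by rw [hfour]; simp)
  have hcomm : ¬ IsMulCommutative H := fun _ =>
    hcyc (isCyclic_of_isMulCommutative_of_pRankLEOne hr)
  have heven : 2 ∣ Nat.card H := (dvd_mul_right 2 (c + 1)).trans (hcard ▸ hdvd)
  have hle : (2 * m + 1) ^ 2 ≤ 4 * c * m + 1 :=
    calc (2 * m + 1) ^ 2 ≤ (Nat.card (center H) + 1) ^ 2 :=
          Nat.pow_le_pow_left (Nat.succ_le_succ (Nat.le_of_dvd Nat.card_pos hZ)) 2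
      _ ≤ Nat.card H + 1 := hFrob.sq_card_center_complement_add_one_le hpoc heven hcomm
      _ = 4 * c * m + 1 := by rw [hcard]
  exact not_dvd_of_sq_le hc (Nat.pos_of_mul_pos_left hpos) hle hdvd
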